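/- Let A = {(cos t, sin t) : θ₁ ≤ t ≤ θ₂} be an arc of the unit circle, where 0 < θ₂ − θ₁ ≤ 2π. Then lim_{H→∞} (1/H)·|{(p,q) ∈ A ∩ ℚ² : h(p,q) ≤ H}| = 2(θ₂−θ₁)/π²; that is, the number of rational points on A of height at most H is asymptotic to (2·length(A)/π²)·H as H → ∞. -/

import Mathlib

open Filter

/-- The height of a rational point `(p,q)`: the minimal positive integer `h` such that
`(hp, hq) ∈ ℤ²`. -/
noncomputable def height (p q : ℚ) : ℕ :=
  sInf {h : ℕ | 0 < h ∧ (∃ a : ℤ, (h : ℚ) * p = a) ∧ (∃ b : ℤ, (h : ℚ) * q = b)}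

/-!
The squares of the Gaussian integers give the points `z² / |z|²` of the unit circle. If `z` is
primitive with coordinates of opposite parity, then `z² / |z|²` has height `|z|²`; every rational
point of the circle, up to exchanging its coordinates, comes from exactly two such `z`, which are
opposite to each other. The points of height at most `H` on an arc of half-length `η` thus
correspond to the lattice points of this kind in a double sector of radius `√H` and area `η H`.
Lattice points whose coordinates have opposite parity have density `1 / 2`, and sieving out common
(necessarily odd) divisors multiplies this by `∑_{d odd} μ(d) / d² = 8 / π²`. Adding the arc and
its mirror image in the diagonal and halving gives `4 η / π²` points per unit of height.
-/

open Bornology MeasureTheory Metric Module Topology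
open scoped Pointwise ArithmeticFunction.Moebius

section LatticePoints

variable {ι : Type*}

/-- The integer vectors lying in a region `S` of `ℝ^ι`. -/
def intPoints (S : Set (ι → ℝ)) : Set (ι → ℤ) := {z | (fun i ↦ (z i : ℝ)) ∈ S}

lemma intPoints_mono {S T : Set (ι → ℝ)} (h : S ⊆ T) : intPoints S ⊆ intPoints T :=
  fun _ hz ↦ h hz

lemma inter_inv_smul_intLattice_eq_image [Finite ι] {r : ℝ} (hr : r ≠ 0) (S : Set (ι → ℝ)) :
    S ∩ r⁻¹ • (Submodule.span ℤ (Set.range (Pi.basisFun ℝ ι)) : Set (ι → ℝ)) =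
      (fun z : ι → ℤ ↦ r⁻¹ • fun i ↦ (z i : ℝ)) '' intPoints (r • S) := by
  ext v
  simp only [intPoints, Set.mem_inter_iff, Set.mem_smul_set, Set.mem_image, SetLike.mem_coe,
    Basis.mem_span_iff_repr_mem, Pi.basisFun_repr, Set.mem_ofPred_eq]
  constructor
  · rintro ⟨hv, w, hw, rfl⟩
    choose z hz using hw
    exact ⟨z, ⟨_, hv, by simp [← hz, smul_smul, hr, funext_iff]⟩, by simp [← hz, funext_iff]⟩
  · rintro ⟨z, ⟨w, hw, hwz⟩, rfl⟩
    exact ⟨by rwa [← hwz, inv_smul_smul₀ hr], _, fun i ↦ ⟨z i, rfl⟩, rfl⟩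

lemma intPoints_closedBall [Fintype ι] {ρ : ℝ} (hρ : 0 ≤ ρ) :
    intPoints (closedBall (0 : ι → ℝ) ρ) = Set.Icc (fun _ ↦ -⌊ρ⌋) (fun _ ↦ ⌊ρ⌋) := by
  ext z
  simp only [intPoints, Set.mem_ofPred_eq, mem_closedBall_zero_iff, pi_norm_le_iff_of_nonneg hρ,
    Real.norm_eq_abs, Set.mem_Icc, Pi.le_def, ← forall_and]
  refine forall_congr' fun i ↦ ?_
  rw [← abs_le, Int.le_floor, Int.cast_abs]

lemma finite_intPoints [Finite ι] {S : Set (ι → ℝ)} (hS : IsBounded S) :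
    (intPoints S).Finite := by
  classical
  have := Fintype.ofFinite ι
  obtain ⟨ρ, hρ, hSρ⟩ := hS.subset_closedBall_lt 0 0
  refine Set.Finite.subset ?_ (intPoints_mono hSρ)
  rw [intPoints_closedBall hρ.le]
  exact Set.finite_Icc _ _

variable [Fintype ι]

-- For `ρ < 1` the origin is the only integer point, which is why it has to be removed.
lemma ncard_intPoints_closedBall_diff_zero_le {ρ : ℝ} (hρ : 0 ≤ ρ) :
    ((intPoints (closedBall (0 : ι → ℝ) ρ) \ {0}).ncard : ℝ) ≤ (3 * ρ) ^ Fintype.card ι := by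
  classical
  rw [intPoints_closedBall hρ]
  obtain hρ1 | hρ1 := lt_or_ge ρ 1
  · rw [Int.floor_eq_zero_iff.2 ⟨hρ, hρ1⟩, neg_zero, ← Pi.zero_def, Set.Icc_self, Set.sdiff_self,
      Set.ncard_empty, Nat.cast_zero]
    positivity
  · have hcard : (Set.Icc (fun _ : ι ↦ -⌊ρ⌋) (fun _ ↦ ⌊ρ⌋)).ncard =
        (⌊ρ⌋ + 1 - -⌊ρ⌋).toNat ^ Fintype.card ι := by
      rw [← Finset.coe_Icc, Set.ncard_coe_finset, Pi.card_Icc, Finset.prod_const, Int.card_Icc,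
        Finset.card_univ]
    have hside : (((⌊ρ⌋ + 1 - -⌊ρ⌋).toNat : ℤ) : ℝ) ≤ 3 * ρ := by
      rw [Int.toNat_of_nonneg (by linarith [Int.floor_nonneg.2 hρ])]
      push_cast
      linarith [Int.floor_le ρ]
    calc ((Set.Icc (fun _ : ι ↦ -⌊ρ⌋) (fun _ ↦ ⌊ρ⌋) \ {0}).ncard : ℝ)
        ≤ (Set.Icc (fun _ : ι ↦ -⌊ρ⌋) (fun _ ↦ ⌊ρ⌋)).ncard := by
          exact_mod_cast Set.ncard_le_ncard Set.sdiff_subset (Set.finite_Icc _ _)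
      _ ≤ (3 * ρ) ^ Fintype.card ι := by
          rw [hcard, Nat.cast_pow]
          gcongr
          exact_mod_cast hside

/-- A bounded Jordan-measurable region that is star-shaped about the origin: the number of integer
points in its dilate by a real factor `r` is asymptotic to its volume times `r ^ card ι`. -/
structure IsJordanStar (S : Set (ι → ℝ)) : Prop where
  isBounded : IsBounded S
  measurableSet : MeasurableSet S
  volume_frontier : volume (frontier S) = 0
  starConvex : StarConvex ℝ 0 S

namespace IsJordanStar

variable {S : Set (ι → ℝ)}

lemma smul_subset_smul (hS : IsJordanStar S) {a b : ℝ} (ha : 0 < a) (hab : a ≤ b) :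
    a • S ⊆ b • S := by
  have hb : 0 < b := ha.trans_le hab
  rintro _ ⟨v, hv, rfl⟩
  refine ⟨(a / b) • v, hS.starConvex.smul_mem hv (by positivity) ((div_le_one hb).2 hab), ?_⟩
  simp only [smul_smul, mul_div_cancel₀ a hb.ne']

lemma preimage_linearEquiv (hS : IsJordanStar S) (e : (ι → ℝ) ≃ₗ[ℝ] (ι → ℝ)) :
    IsJordanStar (e ⁻¹' S) where
  isBounded := by
    rw [← e.image_symm_eq_preimage]
    exact e.symm.toContinuousLinearEquiv.lipschitz.isBounded_image hS.isBounded
  measurableSet := hS.measurableSet.preimage e.toContinuousLinearEquiv.continuous.measurable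
  volume_frontier := by
    have := e.toContinuousLinearEquiv.toHomeomorph.preimage_frontier S
    change e ⁻¹' frontier S = frontier (e ⁻¹' S) at this
    rw [← this, Measure.addHaar_preimage_linearEquiv, hS.volume_frontier, mul_zero]
  starConvex := StarConvex.linear_preimage e.toLinearMap (by simpa using hS.starConvex)

theorem tendsto_ncard_intPoints (hS : IsJordanStar S) :
    Tendsto (fun r : ℝ ↦ ((intPoints (r • S)).ncard : ℝ) / r ^ Fintype.card ι) atTop
      (𝓝 (volume.real S)) := by
  refine (tendsto_card_div_pow_atTop_volume' S hS.isBounded hS.measurableSet hS.volume_frontier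
    fun _ _ ↦ hS.smul_subset_smul).congr' ?_
  filter_upwards [eventually_ne_atTop 0] with r hr
  have hinj : Function.Injective fun z : ι → ℤ ↦ r⁻¹ • fun i ↦ (z i : ℝ) :=
    (smul_right_injective _ (inv_ne_zero hr)).comp Int.cast_injective.comp_left
  rw [inter_inv_smul_intLattice_eq_image hr, Nat.card_coe_set_eq,
    Set.ncard_image_of_injective _ hinj]

theorem tendsto_ncard_intPoints_preimage (hS : IsJordanStar S) (e : (ι → ℝ) ≃ₗ[ℝ] (ι → ℝ)) :
    Tendsto (fun r : ℝ ↦ ((intPoints (e ⁻¹' (r • S))).ncard : ℝ) / r ^ Fintype.card ι) atTop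
      (𝓝 (volume.real S / |LinearMap.det (e : (ι → ℝ) →ₗ[ℝ] (ι → ℝ))|)) := by
  have hvol : volume.real (e ⁻¹' S) =
      volume.real S / |LinearMap.det (e : (ι → ℝ) →ₗ[ℝ] (ι → ℝ))| := by
    rw [measureReal_def, Measure.addHaar_preimage_linearEquiv, ENNReal.toReal_mul,
      ENNReal.toReal_ofReal (abs_nonneg _), LinearEquiv.det_coe_symm, abs_inv, measureReal_def,
      inv_mul_eq_div]
  rw [← hvol]
  refine (hS.preimage_linearEquiv e).tendsto_ncard_intPoints.congr fun r ↦ ?_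
  have hcomm : r • e ⁻¹' S = e ⁻¹' (r • S) := by
    simp only [← e.image_symm_eq_preimage]
    exact (image_smul_set ..).symm
  rw [hcomm]

end IsJordanStar

end LatticePoints

section OddPoints

/-- The integer points of `S` whose coordinates have opposite parity. -/
def oddPoints (S : Set (Fin 2 → ℝ)) : Set (Fin 2 → ℤ) := {z ∈ intPoints S | Odd (z 0 + z 1)}

lemma oddPoints_subset_intPoints (S : Set (Fin 2 → ℝ)) : oddPoints S ⊆ intPoints S :=
  fun _ hz ↦ hz.1

lemma finite_oddPoints {S : Set (Fin 2 → ℝ)} (hS : IsBounded S) : (oddPoints S).Finite :=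
  (finite_intPoints hS).subset (oddPoints_subset_intPoints S)

/-- The map `(x, y) ↦ (x + y, x - y)`, used to index the integer points whose coordinates have equal
parity. -/
def sumDiff {R : Type*} [AddGroup R] (v : Fin 2 → R) : Fin 2 → R := ![v 0 + v 1, v 0 - v 1]

lemma sumDiff_injective : Function.Injective (sumDiff : (Fin 2 → ℤ) → Fin 2 → ℤ) := by
  intro v w h
  have h0 := congrFun h 0
  have h1 := congrFun h 1
  simp only [sumDiff, Matrix.cons_val_zero, Matrix.cons_val_one] at h0 h1
  ext i
  fin_cases i <;> simp <;> lia

lemma exists_sumDiff_eq_iff {z : Fin 2 → ℤ} : (∃ w, sumDiff w = z) ↔ Even (z 0 + z 1) := by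
  constructor
  · rintro ⟨w, rfl⟩
    exact ⟨w 0, by simp [sumDiff]⟩
  · rintro ⟨k, hk⟩
    refine ⟨![k, z 0 - k], ?_⟩
    ext i
    fin_cases i
    · simp [sumDiff]
    · simpa [sumDiff, sub_sub_eq_add_sub, sub_eq_iff_eq_add, add_comm] using hk.symm

lemma mem_intPoints_preimage_sumDiff {S : Set (Fin 2 → ℝ)} {w : Fin 2 → ℤ} :
    w ∈ intPoints (sumDiff ⁻¹' S) ↔ sumDiff w ∈ intPoints S := by
  have hcast : sumDiff (fun i ↦ (w i : ℝ)) = fun i ↦ ((sumDiff w i : ℤ) : ℝ) := by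
    ext i
    fin_cases i <;> simp [sumDiff]
  simp only [intPoints, Set.mem_ofPred_eq, Set.mem_preimage, hcast]

/-- `sumDiff` as a linear automorphism of the plane. -/
noncomputable def sumDiffEquiv : (Fin 2 → ℝ) ≃ₗ[ℝ] (Fin 2 → ℝ) :=
  Matrix.toLin'OfInv (M := !![1 / 2, 1 / 2; 1 / 2, -1 / 2]) (M' := !![1, 1; 1, -1])
    (by ext i j; fin_cases i <;> fin_cases j <;> norm_num)
    (by ext i j; fin_cases i <;> fin_cases j <;> norm_num)

lemma coe_sumDiffEquiv : ⇑sumDiffEquiv = sumDiff := by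
  ext v i
  fin_cases i <;>
    simp [sumDiffEquiv, sumDiff, Matrix.toLin'OfInv, Matrix.mulVec, dotProduct, sub_eq_add_neg]

lemma det_sumDiffEquiv :
    LinearMap.det (sumDiffEquiv : (Fin 2 → ℝ) →ₗ[ℝ] (Fin 2 → ℝ)) = -2 := by
  have hcoe : (sumDiffEquiv : (Fin 2 → ℝ) →ₗ[ℝ] (Fin 2 → ℝ)) =
      Matrix.toLin' !![1, 1; 1, -1] := rfl
  rw [hcoe, LinearMap.det_toLin', Matrix.det_fin_two_of]
  norm_num

lemma oddPoints_eq_sdiff (S : Set (Fin 2 → ℝ)) :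
    oddPoints S = intPoints S \ sumDiff '' intPoints (sumDiff ⁻¹' S) := by
  ext z
  refine and_congr_right fun hz ↦ ?_
  rw [← Int.not_even_iff_odd, ← exists_sumDiff_eq_iff, not_iff_not]
  constructor
  · rintro ⟨w, rfl⟩
    exact ⟨w, mem_intPoints_preimage_sumDiff.2 hz, rfl⟩
  · rintro ⟨w, -, hw⟩
    exact ⟨w, hw⟩

lemma ncard_oddPoints {S : Set (Fin 2 → ℝ)} (hS : IsBounded S) :
    ((oddPoints S).ncard : ℝ) = (intPoints S).ncard - (intPoints (sumDiff ⁻¹' S)).ncard := by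
  have hsub : sumDiff '' intPoints (sumDiff ⁻¹' S) ⊆ intPoints S :=
    Set.image_subset_iff.2 fun _ ↦ mem_intPoints_preimage_sumDiff.1
  rw [oddPoints_eq_sdiff, Set.cast_ncard_sdiff hsub (finite_intPoints hS),
    Set.ncard_image_of_injective _ sumDiff_injective]

lemma IsJordanStar.tendsto_ncard_oddPoints {S : Set (Fin 2 → ℝ)} (hS : IsJordanStar S) :
    Tendsto (fun r : ℝ ↦ ((oddPoints (r • S)).ncard : ℝ) / r ^ 2) atTop
      (𝓝 (volume.real S / 2)) := by
  have hlim := hS.tendsto_ncard_intPoints.sub (hS.tendsto_ncard_intPoints_preimage sumDiffEquiv)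
  rw [det_sumDiffEquiv, coe_sumDiffEquiv, abs_neg, abs_two, sub_half, Fintype.card_fin] at hlim
  refine hlim.congr fun r ↦ ?_
  rw [← sub_div, ncard_oddPoints (hS.isBounded.smul₀ r)]

lemma ncard_oddPoints_smul_le {S : Set (Fin 2 → ℝ)} {K r : ℝ} (hK : 0 ≤ K) (hr : 0 ≤ r)
    (hS : S ⊆ closedBall 0 K) : ((oddPoints (r • S)).ncard : ℝ) ≤ (3 * (r * K)) ^ 2 := by
  have hsub : oddPoints (r • S) ⊆ intPoints (closedBall 0 (r * K)) \ {0} := by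
    rintro z ⟨hz, hodd⟩
    refine ⟨intPoints_mono ?_ hz, fun h ↦ ?_⟩
    · refine (Set.smul_set_mono hS).trans ?_
      rw [smul_closedBall _ _ hK, smul_zero, Real.norm_of_nonneg hr]
    · simp [Set.mem_singleton_iff.1 h] at hodd
  calc ((oddPoints (r • S)).ncard : ℝ)
      ≤ (intPoints (closedBall (0 : Fin 2 → ℝ) (r * K)) \ {0}).ncard := by
        exact_mod_cast Set.ncard_le_ncard hsub (finite_intPoints isBounded_closedBall).sdiff
    _ ≤ (3 * (r * K)) ^ 2 := ncard_intPoints_closedBall_diff_zero_le (by positivity)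

lemma odd_of_mem_oddPoints_of_dvd_gcd {S : Set (Fin 2 → ℝ)} {z : Fin 2 → ℤ} {d : ℕ}
    (hz : z ∈ oddPoints S) (hd : d ∣ Int.gcd (z 0) (z 1)) : Odd d := by
  have hdvd : (d : ℤ) ∣ z 0 + z 1 :=
    dvd_add (Int.dvd_gcd_iff.1 hd).1 (Int.dvd_gcd_iff.1 hd).2
  obtain ⟨k, hk⟩ := hdvd
  have hodd : Odd ((d : ℤ) * k) := hk ▸ hz.2
  exact_mod_cast (Int.odd_mul.1 hodd).1

lemma oddPoints_filter_dvd_gcd_eq_image {d : ℕ} (hd : Odd d) (S : Set (Fin 2 → ℝ)) :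
    {z ∈ oddPoints S | d ∣ Int.gcd (z 0) (z 1)} =
      (fun w ↦ (d : ℤ) • w) '' oddPoints ((d : ℝ)⁻¹ • S) := by
  have hmem (w : Fin 2 → ℤ) : w ∈ oddPoints ((d : ℝ)⁻¹ • S) ↔ (d : ℤ) • w ∈ oddPoints S := by
    have hd0 : (d : ℝ)⁻¹ ≠ 0 := inv_ne_zero (by exact_mod_cast hd.pos.ne')
    refine and_congr ?_ ?_
    · simp only [intPoints, Set.mem_ofPred_eq, Set.mem_smul_set_iff_inv_smul_mem₀ hd0, inv_inv,
        Pi.smul_def, smul_eq_mul, Int.cast_mul, Int.cast_natCast]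
    · rw [Pi.smul_apply, Pi.smul_apply, ← smul_add, smul_eq_mul, Int.odd_mul,
        and_iff_right (by exact_mod_cast hd)]
  ext z
  constructor
  · rintro ⟨hz, hdz⟩
    obtain ⟨⟨a, ha⟩, b, hb⟩ := Int.dvd_gcd_iff.1 hdz
    have hzab : (d : ℤ) • ![a, b] = z := by
      ext i
      fin_cases i <;> simp [ha, hb]
    exact ⟨![a, b], (hmem _).2 (hzab ▸ hz), hzab⟩
  · rintro ⟨w, hw, rfl⟩
    exact ⟨(hmem w).1 hw, Int.dvd_gcd_iff.2 ⟨dvd_mul_right .., dvd_mul_right ..⟩⟩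

lemma ncard_oddPoints_filter_dvd_gcd (d : ℕ) (S : Set (Fin 2 → ℝ)) :
    {z ∈ oddPoints S | d ∣ Int.gcd (z 0) (z 1)}.ncard =
      if Odd d then (oddPoints ((d : ℝ)⁻¹ • S)).ncard else 0 := by
  split_ifs with hd
  · have hd0 : (d : ℤ) ≠ 0 := by exact_mod_cast hd.pos.ne'
    rw [oddPoints_filter_dvd_gcd_eq_image hd,
      Set.ncard_image_of_injective _ (smul_right_injective _ hd0)]
  · have hempty : {z ∈ oddPoints S | d ∣ Int.gcd (z 0) (z 1)} = ∅ :=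
      Set.eq_empty_of_forall_notMem fun z hz ↦ hd (odd_of_mem_oddPoints_of_dvd_gcd hz.1 hz.2)
    rw [hempty, Set.ncard_empty]

end OddPoints

section MoebiusSieve

lemma sum_divisors_moebius {n : ℕ} : ∑ d ∈ n.divisors, μ d = if n = 1 then 1 else 0 := by
  rw [← ArithmeticFunction.coe_mul_zeta_apply, ArithmeticFunction.moebius_mul_coe_zeta,
    ArithmeticFunction.one_apply]

lemma hasSum_moebius_mul_ncard_filter_dvd {α : Type*} {s : Set α} (hs : s.Finite) {g : α → ℕ}
    (hg : ∀ x ∈ s, g x ≠ 0) :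
    HasSum (fun d ↦ (μ d : ℝ) * {x ∈ s | d ∣ g x}.ncard) ({x ∈ s | g x = 1}.ncard : ℝ) := by
  classical
  lift s to Finset α using hs
  have hcard (p : α → Prop) [DecidablePred p] :
      ({x ∈ (s : Set α) | p x}.ncard : ℝ) = ∑ x ∈ s, if p x then 1 else 0 := by
    rw [Finset.sum_boole, ← Set.ncard_coe_finset, Finset.coe_filter]
    simp only [Finset.mem_coe]
  simp only [hcard, Finset.mul_sum]
  refine hasSum_sum fun x hx ↦ ?_
  have hdiv : ∑ d ∈ (g x).divisors, (μ d : ℝ) * (if d ∣ g x then 1 else 0) =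
      if g x = 1 then 1 else 0 := by
    rw [Finset.sum_congr rfl fun d hd ↦ by rw [if_pos (Nat.dvd_of_mem_divisors hd), mul_one]]
    exact_mod_cast sum_divisors_moebius
  rw [← hdiv]
  refine hasSum_sum_of_ne_finset_zero fun d hd ↦ ?_
  rw [if_neg fun hdvd ↦ hd (Nat.mem_divisors.2 ⟨hdvd, hg x hx⟩), mul_zero]

lemma LSeries_coprime_moebius {N : ℕ} [NeZero N] {s : ℂ} (hs : 1 < s.re) :
    LSeries (fun d ↦ if d.Coprime N then (μ d : ℂ) else 0) s =
      ((∏ p ∈ N.primeFactors, (1 - (p : ℂ) ^ (-s))) * riemannZeta s)⁻¹ := by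
  have hs1 : s ≠ 1 := by
    rintro rfl
    simp at hs
  rw [← DirichletCharacter.LFunctionTrivChar_eq_mul_riemannZeta hs1]
  refine eq_inv_of_mul_eq_one_right ?_
  rw [DirichletCharacter.LFunctionTrivChar, DirichletCharacter.LFunction_eq_LSeries _ hs]
  convert DirichletCharacter.LSeries.mul_mu_eq_one (1 : DirichletCharacter ℂ N) hs using 3
  ext d
  by_cases hd : d.Coprime N
  · simp [hd, MulChar.one_apply ((ZMod.isUnit_iff_coprime d N).2 hd)]
  · simp [hd, MulChar.map_nonunit _ (mt (ZMod.isUnit_iff_coprime d N).1 hd)]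

lemma tsum_odd_moebius_div_sq :
    ∑' d : ℕ, (if Odd d then (μ d : ℝ) / d ^ 2 else 0) = 8 / Real.pi ^ 2 := by
  have hL := LSeries_coprime_moebius (N := 2) (s := 2) (by norm_num)
  have hterm (d : ℕ) : LSeries.term (fun d ↦ if d.Coprime 2 then (μ d : ℂ) else 0) 2 d =
      ((if Odd d then (μ d : ℝ) / d ^ 2 else 0 : ℝ) : ℂ) := by
    rw [LSeries.term_def₀ (by simp)]
    simp only [Nat.coprime_two_right]
    split_ifs <;> simp [Complex.cpow_neg, div_eq_mul_inv]
  rw [← Complex.ofReal_inj, Complex.ofReal_tsum, ← tsum_congr hterm]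
  refine hL.trans ?_
  rw [riemannZeta_two, Nat.Prime.primeFactors Nat.prime_two, Finset.prod_singleton]
  push_cast
  rw [Complex.cpow_neg]
  norm_num
  ring

end MoebiusSieve

section PrimitivePoints

/-- The primitive integer vectors whose coordinates have opposite parity. -/
def oddPrimitive : Set (Fin 2 → ℤ) := {z | Odd (z 0 + z 1) ∧ Int.gcd (z 0) (z 1) = 1}

lemma intPoints_inter_oddPrimitive (S : Set (Fin 2 → ℝ)) :
    intPoints S ∩ oddPrimitive = {z ∈ oddPoints S | Int.gcd (z 0) (z 1) = 1} := by
  ext z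
  simp only [oddPoints, oddPrimitive, Set.mem_inter_iff, Set.mem_ofPred_eq, and_assoc]

lemma hasSum_moebius_mul_ncard_oddPoints {S : Set (Fin 2 → ℝ)} (hS : IsBounded S) :
    HasSum (fun d : ℕ ↦ if Odd d then (μ d : ℝ) * (oddPoints ((d : ℝ)⁻¹ • S)).ncard else 0)
      ((intPoints S ∩ oddPrimitive).ncard : ℝ) := by
  have hgcd : ∀ z ∈ oddPoints S, Int.gcd (z 0) (z 1) ≠ 0 := by
    rintro z ⟨-, hz⟩ h
    rw [Int.gcd_eq_zero_iff] at h
    simp [h.1, h.2] at hz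
  rw [intPoints_inter_oddPrimitive]
  refine (hasSum_moebius_mul_ncard_filter_dvd (finite_oddPoints hS) hgcd).congr_fun fun d ↦ ?_
  rw [ncard_oddPoints_filter_dvd_gcd, Nat.cast_ite, Nat.cast_zero, mul_ite, mul_zero]

namespace IsJordanStar

variable {S : Set (Fin 2 → ℝ)}

lemma tendsto_ncard_oddPoints_inv_smul (hS : IsJordanStar S) {d : ℝ} (hd : 0 < d) :
    Tendsto (fun r : ℝ ↦ ((oddPoints (d⁻¹ • r • S)).ncard : ℝ) / r ^ 2) atTop
      (𝓝 (volume.real S / 2 / d ^ 2)) := by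
  have hlim := hS.tendsto_ncard_oddPoints.comp (tendsto_id.atTop_div_const hd)
  refine (hlim.div_const (d ^ 2)).congr fun r ↦ ?_
  simp only [Function.comp_apply, id_eq, smul_smul, div_eq_inv_mul r d]
  field_simp

theorem tendsto_ncard_inter_oddPrimitive (hS : IsJordanStar S) :
    Tendsto (fun r : ℝ ↦ ((intPoints (r • S) ∩ oddPrimitive).ncard : ℝ) / r ^ 2) atTop
      (𝓝 (4 / Real.pi ^ 2 * volume.real S)) := by
  obtain ⟨K, hK, hSK⟩ := hS.isBounded.subset_closedBall_lt 0 0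
  have hval : 4 / Real.pi ^ 2 * volume.real S =
      ∑' d : ℕ, (if Odd d then (μ d : ℝ) / d ^ 2 else 0) * (volume.real S / 2) := by
    rw [tsum_mul_right, tsum_odd_moebius_div_sq]
    ring
  have hseries (r : ℝ) : ((intPoints (r • S) ∩ oddPrimitive).ncard : ℝ) / r ^ 2 =
      ∑' d : ℕ, (if Odd d then (μ d : ℝ) * (oddPoints ((d : ℝ)⁻¹ • r • S)).ncard else 0) /
        r ^ 2 := by
    rw [tsum_div_const, (hasSum_moebius_mul_ncard_oddPoints (hS.isBounded.smul₀ r)).tsum_eq]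
  simp only [hval, hseries]
  refine tendsto_tsum_of_dominated_convergence (bound := fun d : ℕ ↦ (3 * K) ^ 2 * (1 / d ^ 2))
    ((Real.summable_one_div_nat_pow.2 one_lt_two).mul_left _) (fun d ↦ ?_) ?_
  · split_ifs with hd
    · have hlim := (hS.tendsto_ncard_oddPoints_inv_smul (Nat.cast_pos.2 hd.pos)).const_mul (μ d : ℝ)
      simpa only [mul_div_assoc, div_mul_eq_mul_div] using hlim
    · simp only [zero_div, zero_mul, tendsto_const_nhds]
  · filter_upwards [eventually_gt_atTop 0] with r hr d
    split_ifs with hd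
    · have hμ : |(μ d : ℝ)| ≤ 1 := by exact_mod_cast ArithmeticFunction.abs_moebius_le_one
      have hcard := ncard_oddPoints_smul_le (r := (d : ℝ)⁻¹ * r) hK.le (by positivity) hSK
      rw [← smul_smul] at hcard
      rw [norm_div, norm_mul, Real.norm_natCast, Real.norm_eq_abs,
        Real.norm_of_nonneg (sq_nonneg r), div_le_iff₀ (by positivity)]
      calc |(μ d : ℝ)| * (oddPoints ((d : ℝ)⁻¹ • r • S)).ncard
          ≤ 1 * (3 * ((d : ℝ)⁻¹ * r * K)) ^ 2 := by gcongr
        _ = (3 * K) ^ 2 * (1 / d ^ 2) * r ^ 2 := by ring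
    · rw [zero_div, norm_zero]
      positivity

end IsJordanStar

end PrimitivePoints

section Height

lemma height_swap (p q : ℚ) : height p q = height q p := by
  simp only [height, and_comm (a := ∃ a : ℤ, _ * p = (a : ℚ))]

lemma height_div_div {a b n : ℤ} (hn : 0 < n) (hc : IsCoprime a n) :
    (height (a / n) (b / n) : ℤ) = n := by
  lift n to ℕ using hn.le
  have hn0 : (n : ℚ) ≠ 0 := by exact_mod_cast hn.ne'
  refine congrArg Nat.cast (IsLeast.csInf_eq ⟨⟨by exact_mod_cast hn, ⟨a, ?_⟩, b, ?_⟩, ?_⟩)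
  · rw [Int.cast_natCast, mul_div_cancel₀ _ hn0]
  · rw [Int.cast_natCast, mul_div_cancel₀ _ hn0]
  · rintro h ⟨h0, ⟨c, hac⟩, -⟩
    field_simp at hac
    have hac' : (h : ℤ) * a = n * c := by exact_mod_cast hac
    exact Nat.le_of_dvd h0 (by exact_mod_cast hc.symm.dvd_of_dvd_mul_right ⟨c, hac'⟩)

end Height

section CircleParam

/-- The rational point of the unit circle given by `z² / |z|²`, where `z` is read as the Gaussian
integer `z 0 + z 1 * i`. -/
def circleParam (z : Fin 2 → ℤ) : ℚ × ℚ :=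
  ((z 0 ^ 2 - z 1 ^ 2) / (z 0 ^ 2 + z 1 ^ 2), 2 * z 0 * z 1 / (z 0 ^ 2 + z 1 ^ 2))

variable {z w : Fin 2 → ℤ}

lemma circleParam_neg (z : Fin 2 → ℤ) : circleParam (-z) = circleParam z := by
  simp [circleParam]

lemma circleParam_sumDiff (z : Fin 2 → ℤ) : circleParam (sumDiff z) = (circleParam z).swap := by
  have hre : (((z 0 + z 1 : ℤ) : ℚ) ^ 2 - ((z 0 - z 1 : ℤ) : ℚ) ^ 2) = 2 * (2 * z 0 * z 1) := by
    push_cast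
    ring
  have him : 2 * ((z 0 + z 1 : ℤ) : ℚ) * ((z 0 - z 1 : ℤ) : ℚ) = 2 * (z 0 ^ 2 - z 1 ^ 2) := by
    push_cast
    ring
  have hnorm : ((z 0 + z 1 : ℤ) : ℚ) ^ 2 + ((z 0 - z 1 : ℤ) : ℚ) ^ 2 =
      2 * (z 0 ^ 2 + z 1 ^ 2) := by
    push_cast
    ring
  simp only [circleParam, sumDiff, Matrix.cons_val_zero, Matrix.cons_val_one, hre, him, hnorm,
    mul_div_mul_left _ _ (two_ne_zero (α := ℚ)), Prod.swap_prod_mk]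

lemma sq_add_sq_pos_of_odd (hz : Odd (z 0 + z 1)) : 0 < z 0 ^ 2 + z 1 ^ 2 := by
  refine (by positivity : 0 ≤ z 0 ^ 2 + z 1 ^ 2).lt_of_ne' fun h ↦ ?_
  have h0 : z 0 = 0 := by nlinarith
  have h1 : z 1 = 0 := by nlinarith
  simp [h0, h1] at hz

lemma isCoprime_sq_sub_sq_sq_add_sq (hz : z ∈ oddPrimitive) :
    IsCoprime (z 0 ^ 2 - z 1 ^ 2) (z 0 ^ 2 + z 1 ^ 2) := by
  have hsq : IsCoprime (z 0 ^ 2 + z 1 ^ 2) (z 1 ^ 2) := by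
    have h : IsCoprime (z 0 ^ 2) (z 1 ^ 2) := (Int.isCoprime_iff_gcd_eq_one.2 hz.2).pow
    simpa using h.add_mul_left_left 1
  have htwo : IsCoprime (z 0 ^ 2 + z 1 ^ 2) 2 := by
    have hodd : Odd (z 0 ^ 2 + z 1 ^ 2) := by
      simpa [Int.odd_add, Int.odd_pow, Int.even_pow] using hz.1
    exact Int.isCoprime_two_right.2 hodd
  have hsub : z 0 ^ 2 - z 1 ^ 2 = -(2 * z 1 ^ 2) + (z 0 ^ 2 + z 1 ^ 2) * 1 := by ring
  rw [hsub]
  exact ((htwo.mul_right hsq).neg_right.add_mul_left_right 1).symm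

lemma height_circleParam (hz : z ∈ oddPrimitive) :
    (height (circleParam z).1 (circleParam z).2 : ℤ) = z 0 ^ 2 + z 1 ^ 2 := by
  have h := height_div_div (b := 2 * z 0 * z 1) (sq_add_sq_pos_of_odd hz.1)
    (isCoprime_sq_sub_sq_sq_add_sq hz)
  push_cast at h
  exact h

lemma height_mul_fst_circleParam (hz : z ∈ oddPrimitive) :
    (height (circleParam z).1 (circleParam z).2 : ℚ) * (circleParam z).1 =
      (z 0 ^ 2 - z 1 ^ 2 : ℤ) := by
  have hnorm : (z 0 ^ 2 + z 1 ^ 2 : ℚ) ≠ 0 := by exact_mod_cast (sq_add_sq_pos_of_odd hz.1).ne'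
  rw [← Int.cast_natCast, height_circleParam hz, circleParam]
  push_cast
  exact mul_div_cancel₀ _ hnorm

lemma height_mul_snd_circleParam (hz : z ∈ oddPrimitive) :
    (height (circleParam z).1 (circleParam z).2 : ℚ) * (circleParam z).2 = (2 * z 0 * z 1 : ℤ) := by
  have hnorm : (z 0 ^ 2 + z 1 ^ 2 : ℚ) ≠ 0 := by exact_mod_cast (sq_add_sq_pos_of_odd hz.1).ne'
  rw [← Int.cast_natCast, height_circleParam hz, circleParam]
  push_cast
  exact mul_div_cancel₀ _ hnorm

lemma circleParam_eq_iff (hz : z ∈ oddPrimitive) (hw : w ∈ oddPrimitive) :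
    circleParam z = circleParam w ↔ z = w ∨ z = -w := by
  refine ⟨fun h ↦ ?_, ?_⟩
  · have hre : z 0 ^ 2 - z 1 ^ 2 = w 0 ^ 2 - w 1 ^ 2 := by
      rw [← Int.cast_inj (α := ℚ), ← height_mul_fst_circleParam hz,
        ← height_mul_fst_circleParam hw, h]
    have him : 2 * z 0 * z 1 = 2 * w 0 * w 1 := by
      rw [← Int.cast_inj (α := ℚ), ← height_mul_snd_circleParam hz,
        ← height_mul_snd_circleParam hw, h]
    have hsq : (⟨z 0, z 1⟩ : GaussianInt) ^ 2 = ⟨w 0, w 1⟩ ^ 2 := by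
      ext <;> simp [sq] <;> linarith
    refine (sq_eq_sq_iff_eq_or_eq_neg.1 hsq).imp (fun h ↦ ?_) (fun h ↦ ?_) <;>
    · rw [Zsqrtd.ext_iff] at h
      ext i
      fin_cases i
      exacts [h.1, h.2]
  · rintro (rfl | rfl)
    exacts [rfl, circleParam_neg w]

-- Multiplied by the height, the first coordinate of `circleParam` is odd and the second even.
lemma circleParam_ne_swap_circleParam (hz : z ∈ oddPrimitive) (hw : w ∈ oddPrimitive) :
    circleParam z ≠ (circleParam w).swap := by
  intro h
  have heq : z 0 ^ 2 - z 1 ^ 2 = 2 * w 0 * w 1 := by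
    rw [← Int.cast_inj (α := ℚ), ← height_mul_fst_circleParam hz,
      ← height_mul_snd_circleParam hw, h, Prod.fst_swap, Prod.snd_swap, height_swap]
  have hodd : Odd (z 0 ^ 2 - z 1 ^ 2) := by
    simpa [Int.odd_add, Int.odd_sub, Int.odd_pow, Int.even_pow] using hz.1
  rw [heq, mul_assoc] at hodd
  exact Int.not_even_iff_odd.2 hodd (even_two_mul _)

-- The witness is the slope `q / (1 + p)` of the line from `(-1, 0)` to `(p, q)`.
lemma exists_circleParam_eq {p q : ℚ} (h : p ^ 2 + q ^ 2 = 1) :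
    ∃ z : Fin 2 → ℤ, Int.gcd (z 0) (z 1) = 1 ∧ circleParam z = (p, q) := by
  obtain hp | hp := eq_or_ne (1 + p) 0
  · obtain rfl : p = -1 := by linarith
    obtain rfl : q = 0 := by nlinarith
    exact ⟨![0, 1], by simp, by simp [circleParam]⟩
  · obtain ⟨t, rfl⟩ : ∃ t, q = t * (1 + p) := ⟨q / (1 + p), (div_mul_cancel₀ q hp).symm⟩
    have hpt : (1 + t ^ 2) * p = 1 - t ^ 2 := mul_left_cancel₀ hp (by linear_combination h)
    have hden : (0 : ℚ) < t.den := Nat.cast_pos.2 t.den_pos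
    refine ⟨![t.den, t.num], ?_, ?_⟩
    · simpa [Int.gcd, Nat.coprime_comm] using t.reduced
    · have hnum : (t.num : ℚ) = t * t.den := t.mul_den_eq_num.symm
      have hnorm : (t.den : ℚ) ^ 2 + (t * t.den) ^ 2 ≠ 0 :=
        (add_pos_of_pos_of_nonneg (pow_pos hden 2) (sq_nonneg _)).ne'
      simp only [circleParam, Matrix.cons_val_zero, Matrix.cons_val_one, Int.cast_natCast, hnum,
        Prod.mk.injEq, div_eq_iff hnorm]
      constructor
      · linear_combination -(t.den : ℚ) ^ 2 * hpt
      · linear_combination -(t.den : ℚ) ^ 2 * t * hpt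

lemma mem_oddPrimitive_of_gcd_sumDiff_eq_one (hz : Int.gcd (sumDiff z 0) (sumDiff z 1) = 1) :
    z ∈ oddPrimitive := by
  have hcop : IsCoprime (z 0 + z 1) (z 0 - z 1) := Int.isCoprime_iff_gcd_eq_one.2 hz
  refine ⟨Int.not_even_iff_odd.1 fun hadd ↦ ?_, ?_⟩
  · have hsub : Even (z 0 - z 1) := Int.even_sub.2 (Int.even_add.1 hadd)
    exact Int.prime_two.not_isUnit (hcop.isUnit_of_dvd' hadd.two_dvd hsub.two_dvd)
  · obtain ⟨a, b, hab⟩ := hcop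
    exact Int.isCoprime_iff_gcd_eq_one.1 ⟨a + b, a - b, by linear_combination hab⟩

lemma exists_oddPrimitive_circleParam_eq_or_swap_eq {x : ℚ × ℚ} (hx : x.1 ^ 2 + x.2 ^ 2 = 1) :
    ∃ z ∈ oddPrimitive, circleParam z = x ∨ (circleParam z).swap = x := by
  obtain ⟨z, hgcd, hz⟩ := exists_circleParam_eq hx
  obtain heven | hodd := Int.even_or_odd (z 0 + z 1)
  · obtain ⟨w, rfl⟩ := exists_sumDiff_eq_iff.2 heven
    exact ⟨w, mem_oddPrimitive_of_gcd_sumDiff_eq_one hgcd,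
      Or.inr ((circleParam_sumDiff w).symm.trans hz)⟩
  · exact ⟨z, ⟨hodd, hgcd⟩, Or.inl hz⟩

end CircleParam

section Counting

lemma ncard_eq_two_mul_ncard_image {α β : Type*} {s : Set α} (hs : s.Finite) {f : α → β}
    {σ : α → α} (hσ : Set.MapsTo σ s s) (hne : ∀ x ∈ s, σ x ≠ x)
    (hf : ∀ x ∈ s, ∀ y ∈ s, f x = f y ↔ x = y ∨ x = σ y) : s.ncard = 2 * (f '' s).ncard := by
  classical
  lift s to Finset α using hs
  rw [← Finset.coe_image, Set.ncard_coe_finset, Set.ncard_coe_finset,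
    Finset.card_eq_sum_card_image f s, mul_comm]
  refine Finset.sum_const_nat fun b hb ↦ ?_
  obtain ⟨y, hy, rfl⟩ := Finset.mem_image.1 hb
  have hfib : {x ∈ s | f x = f y} = {y, σ y} := by
    ext x
    simp only [Finset.mem_filter, Finset.mem_insert, Finset.mem_singleton]
    refine ⟨fun ⟨hx, hxy⟩ ↦ (hf x hx y hy).1 hxy, ?_⟩
    rintro (rfl | rfl)
    exacts [⟨hy, rfl⟩, ⟨hσ hy, (hf _ (hσ hy) y hy).2 (Or.inr rfl)⟩]
  rw [hfib, Finset.card_pair (hne y hy).symm]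

/-- The odd primitive vectors of norm at most `H` parametrising a point of `A`. -/
def paramSet (A : Set (ℚ × ℚ)) (H : ℕ) : Set (Fin 2 → ℤ) :=
  {z ∈ oddPrimitive | circleParam z ∈ A ∧ z 0 ^ 2 + z 1 ^ 2 ≤ H}

lemma finite_paramSet (A : Set (ℚ × ℚ)) (H : ℕ) : (paramSet A H).Finite := by
  refine (Set.finite_Icc (fun _ ↦ -(H : ℤ)) fun _ ↦ (H : ℤ)).subset ?_
  rintro z ⟨-, -, hz⟩
  refine ⟨fun i ↦ ?_, fun i ↦ ?_⟩ <;> fin_cases i <;> simp only [Fin.zero_eta, Fin.mk_one] <;>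
    nlinarith

lemma ncard_paramSet (A : Set (ℚ × ℚ)) (H : ℕ) :
    (paramSet A H).ncard = 2 * (circleParam '' paramSet A H).ncard := by
  refine ncard_eq_two_mul_ncard_image (finite_paramSet A H) (σ := Neg.neg) ?_ ?_
    fun z hz w hw ↦ circleParam_eq_iff hz.1 hw.1
  · rintro z ⟨⟨hodd, hgcd⟩, hA, hH⟩
    refine ⟨⟨?_, ?_⟩, ?_, ?_⟩
    · rwa [Pi.neg_apply, Pi.neg_apply, ← neg_add, odd_neg]
    · simpa using hgcd
    · rwa [circleParam_neg]
    · simpa using hH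
  · rintro z ⟨⟨hodd, -⟩, -⟩ h
    simp [neg_eq_self.1 h] at hodd

theorem two_mul_ncard_height_le {A : Set (ℚ × ℚ)} (hA : ∀ x ∈ A, x.1 ^ 2 + x.2 ^ 2 = 1) (H : ℕ) :
    2 * {x | x ∈ A ∧ height x.1 x.2 ≤ H}.ncard =
      (paramSet A H).ncard + (paramSet (Prod.swap ⁻¹' A) H).ncard := by
  have hunion : {x | x ∈ A ∧ height x.1 x.2 ≤ H} =
      circleParam '' paramSet A H ∪ Prod.swap '' (circleParam '' paramSet (Prod.swap ⁻¹' A) H) := by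
    have hle {z} (hz : z ∈ oddPrimitive) :
        height (circleParam z).1 (circleParam z).2 ≤ H ↔ z 0 ^ 2 + z 1 ^ 2 ≤ H := by
      rw [← height_circleParam hz, Nat.cast_le]
    ext x
    constructor
    · rintro ⟨hxA, hxH⟩
      obtain ⟨z, hz, rfl | rfl⟩ := exists_oddPrimitive_circleParam_eq_or_swap_eq (hA x hxA)
      · exact Or.inl ⟨z, ⟨hz, hxA, (hle hz).1 hxH⟩, rfl⟩
      · rw [Prod.fst_swap, Prod.snd_swap, height_swap] at hxH
        exact Or.inr ⟨_, ⟨z, ⟨hz, hxA, (hle hz).1 hxH⟩, rfl⟩, rfl⟩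
    · rintro (⟨z, ⟨hz, hzA, hzH⟩, rfl⟩ | ⟨_, ⟨z, ⟨hz, hzA, hzH⟩, rfl⟩, rfl⟩)
      · exact ⟨hzA, (hle hz).2 hzH⟩
      · refine ⟨hzA, ?_⟩
        rw [Prod.fst_swap, Prod.snd_swap, height_swap]
        exact (hle hz).2 hzH
  have hdisj : Disjoint (circleParam '' paramSet A H)
      (Prod.swap '' (circleParam '' paramSet (Prod.swap ⁻¹' A) H)) := by
    rw [Set.disjoint_left]
    rintro _ ⟨z, hz, rfl⟩ ⟨_, ⟨w, hw, rfl⟩, h⟩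
    exact circleParam_ne_swap_circleParam hz.1 hw.1 h.symm
  have hfin (B : Set (ℚ × ℚ)) : (circleParam '' paramSet B H).Finite :=
    (finite_paramSet B H).image _
  rw [hunion, Set.ncard_union_eq hdisj (hfin _) ((hfin _).image _),
    Set.ncard_image_of_injective _ Prod.swap_injective, mul_add, ← ncard_paramSet,
    ← ncard_paramSet]

end Counting

section DoubleSector

lemma cos_le_cos_iff_abs_le {η x : ℝ} (hη : 0 ≤ η) (hηπ : η ≤ Real.pi) (hx : |x| ≤ Real.pi) :
    Real.cos η ≤ Real.cos x ↔ |x| ≤ η := by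
  rw [← Real.cos_abs x]
  exact Real.strictAntiOn_cos.le_iff_ge ⟨hη, hηπ⟩ ⟨abs_nonneg x, hx⟩

lemma integral_indicator_cos_le {η : ℝ} (hη : 0 ≤ η) (hηπ : η ≤ Real.pi) :
    ∫ x in -Real.pi..Real.pi, {t | Real.cos η ≤ Real.cos t}.indicator (1 : ℝ → ℝ) x = 2 * η := by
  have hinter : Set.Icc (-Real.pi) Real.pi ∩ {t | Real.cos η ≤ Real.cos t} = Set.Icc (-η) η := by
    ext x
    simp only [Set.mem_inter_iff, Set.mem_ofPred_eq, Set.mem_Icc, ← abs_le]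
    exact ⟨fun h ↦ (cos_le_cos_iff_abs_le hη hηπ h.1).1 h.2,
      fun h ↦ ⟨h.trans hηπ, (cos_le_cos_iff_abs_le hη hηπ (h.trans hηπ)).2 h⟩⟩
  have hmeas : MeasurableSet {t | Real.cos η ≤ Real.cos t} :=
    (isClosed_le continuous_const Real.continuous_cos).measurableSet
  rw [intervalIntegral.integral_of_le (by linarith [Real.pi_pos]), ← integral_Icc_eq_integral_Ioc,
    setIntegral_indicator hmeas, hinter, Pi.one_def, setIntegral_const, Real.volume_real_Icc_of_le
    (by linarith), smul_eq_mul]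
  ring

lemma integral_comp_mul_sub_of_periodic {E : Type*} [NormedAddCommGroup E] [NormedSpace ℝ E]
    {f : ℝ → E} {T : ℝ} (hf : Function.Periodic f T)
    (hint : ∀ a b, IntervalIntegrable f volume a b) {n : ℤ} (hn : n ≠ 0) (a m : ℝ) :
    ∫ x in a..a + T, f (n * x - m) = ∫ x in a..a + T, f x := by
  have hn' : (n : ℝ) ≠ 0 := Int.cast_ne_zero.2 hn
  have hend : n * (a + T) - m = n * a - m + n • T := by
    rw [zsmul_eq_mul]
    ring
  rw [intervalIntegral.integral_comp_mul_sub f hn', hend,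
    hf.intervalIntegral_add_zsmul_eq n _ hint, ← Int.cast_smul_eq_zsmul ℝ, inv_smul_smul₀ hn',
    hf.intervalIntegral_add_eq _ a]

/-- The closed unit disc, in coordinates: `Fin 2 → ℝ` carries the sup norm, so that this is not one
of its balls. -/
def unitDisc : Set (Fin 2 → ℝ) := {v | v 0 ^ 2 + v 1 ^ 2 ≤ 1}

lemma isClosed_unitDisc : IsClosed unitDisc := isClosed_le (by fun_prop) continuous_const

lemma convex_unitDisc : Convex ℝ unitDisc := by
  have hsq : ConvexOn ℝ Set.univ fun x : ℝ ↦ x ^ 2 := even_two.convexOn_pow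
  have hproj (i : Fin 2) : ConvexOn ℝ Set.univ fun v : Fin 2 → ℝ ↦ v i ^ 2 :=
    hsq.comp_linearMap (LinearMap.proj i : (Fin 2 → ℝ) →ₗ[ℝ] ℝ)
  simpa [unitDisc] using ((hproj 0).add (hproj 1)).convex_le 1

lemma smul_mem_unitDisc_iff {r : ℝ} {v : Fin 2 → ℝ} :
    r • v ∈ unitDisc ↔ r ^ 2 * (v 0 ^ 2 + v 1 ^ 2) ≤ 1 := by
  simp only [unitDisc, Set.mem_ofPred_eq, Pi.smul_apply, smul_eq_mul, mul_pow, mul_add]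

lemma smul_cos_sin_mem_inter_unitDisc_iff {C : Set (Fin 2 → ℝ)} {r : ℝ} (hr : 0 < r)
    (hC : ∀ v, r • v ∈ C ↔ v ∈ C) (φ : ℝ) :
    r • ![Real.cos φ, Real.sin φ] ∈ C ∩ unitDisc ↔
      r ∈ Set.Iic 1 ∧ φ ∈ {φ | ![Real.cos φ, Real.sin φ] ∈ C} := by
  rw [and_comm]
  refine and_congr (hC _) ?_
  rw [smul_mem_unitDisc_iff, Matrix.cons_val_zero, Matrix.cons_val_one, Matrix.cons_val_fin_one,
    Real.cos_sq_add_sin_sq, mul_one, sq_le_one_iff₀ hr.le, Set.mem_Iic]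

lemma volume_real_cone_inter_unitDisc {C : Set (Fin 2 → ℝ)} (hC : MeasurableSet C)
    (hcone : ∀ r : ℝ, 0 < r → ∀ v, r • v ∈ C ↔ v ∈ C) :
    volume.real (C ∩ unitDisc) =
      1 / 2 * ∫ φ in -Real.pi..Real.pi,
        {φ | ![Real.cos φ, Real.sin φ] ∈ C}.indicator (1 : ℝ → ℝ) φ := by
  have hS : MeasurableSet (C ∩ unitDisc) := hC.inter isClosed_unitDisc.measurableSet
  have hpolar : ∀ p ∈ polarCoord.target,
      p.1 • (MeasurableEquiv.finTwoArrow.symm ⁻¹' (C ∩ unitDisc)).indicator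
        (1 : ℝ × ℝ → ℝ) (polarCoord.symm p) =
      (Set.Iic 1).indicator id p.1 *
        {φ | ![Real.cos φ, Real.sin φ] ∈ C}.indicator (1 : ℝ → ℝ) p.2 := by
    classical
    rintro ⟨r, φ⟩ ⟨hr, -⟩
    have hv : MeasurableEquiv.finTwoArrow.symm (polarCoord.symm (r, φ)) =
        r • ![Real.cos φ, Real.sin φ] := by
      ext i
      fin_cases i <;> simp
    have hmem := smul_cos_sin_mem_inter_unitDisc_iff hr (hcone r hr) φ
    simp only [Set.indicator_apply, Set.mem_preimage, hv, hmem, ite_and, Pi.one_apply, id_eq,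
      smul_eq_mul, mul_ite, mul_one, mul_zero]
    split_ifs <;> rfl
  have hrad : ∫ r in Set.Ioi (0 : ℝ), (Set.Iic 1).indicator id r = 1 / 2 := by
    rw [setIntegral_indicator measurableSet_Iic, Set.Ioi_inter_Iic,
      ← intervalIntegral.integral_of_le zero_le_one]
    norm_num [integral_id]
  rw [← ((volume_preserving_finTwoArrow ℝ).symm _).measureReal_preimage hS.nullMeasurableSet,
    ← integral_indicator_one (hS.preimage (MeasurableEquiv.measurable _)),
    ← integral_comp_polarCoord_symm,
    setIntegral_congr_fun polarCoord.open_target.measurableSet hpolar, polarCoord_target,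
    Measure.volume_eq_prod, setIntegral_prod_mul, hrad, ← integral_Ioc_eq_integral_Ioo,
    ← intervalIntegral.integral_of_le (by linarith [Real.pi_pos])]

/-- The vectors `v` of the plane whose square, as a complex number, makes an angle at most `η` with
`exp (m * i)`. -/
def doubleCone (m η : ℝ) : Set (Fin 2 → ℝ) :=
  {v | Real.cos η * (v 0 ^ 2 + v 1 ^ 2) ≤
    Real.cos m * (v 0 ^ 2 - v 1 ^ 2) + Real.sin m * (2 * v 0 * v 1)}

/-- The part of `doubleCone m η` in the unit disc. -/
def doubleSector (m η : ℝ) : Set (Fin 2 → ℝ) := doubleCone m η ∩ unitDisc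

variable {m η : ℝ}

lemma isClosed_doubleCone : IsClosed (doubleCone m η) := isClosed_le (by fun_prop) (by fun_prop)

lemma smul_mem_doubleCone_iff {r : ℝ} (hr : r ≠ 0) {v : Fin 2 → ℝ} :
    r • v ∈ doubleCone m η ↔ v ∈ doubleCone m η := by
  have hr2 : 0 < r ^ 2 := by positivity
  conv_rhs => rw [doubleCone, Set.mem_ofPred_eq, ← mul_le_mul_iff_right₀ hr2]
  simp only [doubleCone, Set.mem_ofPred_eq, Pi.smul_apply, smul_eq_mul]
  ring_nf

lemma cos_sin_mem_doubleCone_iff {φ : ℝ} :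
    ![Real.cos φ, Real.sin φ] ∈ doubleCone m η ↔ Real.cos η ≤ Real.cos (2 * φ - m) := by
  simp only [doubleCone, Set.mem_ofPred_eq, Matrix.cons_val_zero, Matrix.cons_val_one,
    Real.cos_sq_add_sin_sq, mul_one, Real.cos_sub, Real.cos_two_mul', Real.sin_two_mul]
  ring_nf

lemma volume_real_doubleSector (hη : 0 ≤ η) (hηπ : η ≤ Real.pi) :
    volume.real (doubleSector m η) = η := by
  have hper : Function.Periodic ({t | Real.cos η ≤ Real.cos t}.indicator (1 : ℝ → ℝ))
      (2 * Real.pi) := fun t ↦ by simp [Set.indicator]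
  have hint (a b : ℝ) : IntervalIntegrable ({t | Real.cos η ≤ Real.cos t}.indicator (1 : ℝ → ℝ))
      volume a b := by
    have hmeas : MeasurableSet {t | Real.cos η ≤ Real.cos t} :=
      (isClosed_le continuous_const Real.continuous_cos).measurableSet
    exact ⟨(integrable_const 1).indicator hmeas, (integrable_const 1).indicator hmeas⟩
  have hcomp := integral_comp_mul_sub_of_periodic hper hint two_ne_zero (-Real.pi) m
  rw [show -Real.pi + 2 * Real.pi = Real.pi by ring, integral_indicator_cos_le hη hηπ,
    Int.cast_two] at hcomp
  rw [doubleSector, volume_real_cone_inter_unitDisc isClosed_doubleCone.measurableSet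
    fun r hr v ↦ smul_mem_doubleCone_iff hr.ne']
  simp only [cos_sin_mem_doubleCone_iff]
  refine (congrArg (1 / 2 * ·) hcomp).trans ?_
  ring

lemma volume_setOf_mul_add_mul_eq_zero {a b : ℝ} (h : a ≠ 0 ∨ b ≠ 0) :
    volume {v : Fin 2 → ℝ | a * v 0 + b * v 1 = 0} = 0 := by
  let f : (Fin 2 → ℝ) →ₗ[ℝ] ℝ := a • LinearMap.proj 0 + b • LinearMap.proj 1
  refine Measure.addHaar_submodule volume (LinearMap.ker f) fun hker ↦ ?_
  have hf : f = 0 := LinearMap.ker_eq_top.1 hker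
  have ha : a = 0 := by simpa [f] using LinearMap.congr_fun hf ![1, 0]
  have hb : b = 0 := by simpa [f] using LinearMap.congr_fun hf ![0, 1]
  simp [ha, hb] at h

lemma frontier_doubleCone_subset (m η : ℝ) :
    frontier (doubleCone m η) ⊆
      {v | Real.sin ((m - η) / 2) * v 0 + -Real.cos ((m - η) / 2) * v 1 = 0} ∪
        {v | Real.sin ((m + η) / 2) * v 0 + -Real.cos ((m + η) / 2) * v 1 = 0} := by
  intro v hv
  have heq : Real.cos η * (v 0 ^ 2 + v 1 ^ 2) =
      Real.cos m * (v 0 ^ 2 - v 1 ^ 2) + Real.sin m * (2 * v 0 * v 1) :=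
    frontier_le_subset_eq (by fun_prop) (by fun_prop) hv
  have hm : m = (m - η) / 2 + (m + η) / 2 := by ring
  have hη : η = (m + η) / 2 - (m - η) / 2 := by ring
  refine mul_eq_zero.1 ?_
  generalize (m - η) / 2 = α, (m + η) / 2 = β at hm hη ⊢
  rw [hm, hη, Real.cos_add, Real.sin_add, Real.cos_sub] at heq
  linear_combination heq / 2

lemma volume_frontier_doubleCone : volume (frontier (doubleCone m η)) = 0 := by
  have hline (α : ℝ) : volume {v : Fin 2 → ℝ | Real.sin α * v 0 + -Real.cos α * v 1 = 0} = 0 := by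
    refine volume_setOf_mul_add_mul_eq_zero ?_
    by_contra! h
    simpa [h.1, neg_eq_zero.1 h.2] using Real.sin_sq_add_cos_sq α
  exact measure_mono_null (frontier_doubleCone_subset m η) (measure_union_null (hline _) (hline _))

lemma isJordanStar_doubleSector : IsJordanStar (doubleSector m η) where
  isBounded := by
    refine (isBounded_closedBall (x := 0) (r := 1)).subset fun v ⟨_, hv⟩ ↦ ?_
    have hv : v 0 ^ 2 + v 1 ^ 2 ≤ 1 := hv
    rw [mem_closedBall_zero_iff, pi_norm_le_iff_of_nonneg zero_le_one, Fin.forall_fin_two]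
    simp only [Real.norm_eq_abs, ← sq_le_one_iff_abs_le_one]
    exact ⟨by linarith [sq_nonneg (v 1)], by linarith [sq_nonneg (v 0)]⟩
  measurableSet := (isClosed_doubleCone.inter isClosed_unitDisc).measurableSet
  volume_frontier :=
    measure_mono_null (frontier_inter_subset _ _) (measure_union_null
      (measure_mono_null Set.inter_subset_left volume_frontier_doubleCone)
      (measure_mono_null Set.inter_subset_right (convex_unitDisc.addHaar_frontier _)))
  starConvex := by
    refine starConvex_zero_iff.2 fun v hv a ha ha1 ↦ ?_
    obtain rfl | ha0 := eq_or_ne a 0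
    · simp [doubleSector, doubleCone, unitDisc]
    · have hzero : (0 : Fin 2 → ℝ) ∈ unitDisc := by simp [unitDisc]
      exact ⟨(smul_mem_doubleCone_iff ha0).2 hv.1,
        (convex_unitDisc.starConvex hzero).smul_mem hv.2 ha ha1⟩

lemma mem_smul_doubleSector_iff {r : ℝ} (hr : 0 < r) {v : Fin 2 → ℝ} :
    v ∈ r • doubleSector m η ↔ v ∈ doubleCone m η ∧ v 0 ^ 2 + v 1 ^ 2 ≤ r ^ 2 := by
  rw [Set.mem_smul_set_iff_inv_smul_mem₀ hr.ne']
  refine and_congr (smul_mem_doubleCone_iff (inv_ne_zero hr.ne')) ?_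
  rw [smul_mem_unitDisc_iff, inv_pow, inv_mul_le_iff₀ (by positivity), mul_one]

end DoubleSector

section Arc

/-- The rational points of the arc of the unit circle with midpoint `m` and half-length `η`. -/
def rationalArc (m η : ℝ) : Set (ℚ × ℚ) :=
  {x | ∃ t, m - η ≤ t ∧ t ≤ m + η ∧ (x.1 : ℝ) = Real.cos t ∧ (x.2 : ℝ) = Real.sin t}

variable {m η : ℝ}

lemma sq_add_sq_eq_one_of_mem_rationalArc {x : ℚ × ℚ} (hx : x ∈ rationalArc m η) :
    x.1 ^ 2 + x.2 ^ 2 = 1 := by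
  obtain ⟨t, -, -, hcos, hsin⟩ := hx
  have h : (x.1 : ℝ) ^ 2 + (x.2 : ℝ) ^ 2 = 1 := by rw [hcos, hsin, Real.cos_sq_add_sin_sq]
  exact_mod_cast h

lemma swap_preimage_rationalArc :
    Prod.swap ⁻¹' rationalArc m η = rationalArc (Real.pi / 2 - m) η := by
  ext x
  constructor
  · rintro ⟨t, hmt, htm, hcos, hsin⟩
    exact ⟨Real.pi / 2 - t, by linarith, by linarith, by rwa [Real.cos_pi_div_two_sub],
      by rwa [Real.sin_pi_div_two_sub]⟩
  · rintro ⟨t, hmt, htm, hcos, hsin⟩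
    exact ⟨Real.pi / 2 - t, by linarith, by linarith, by rwa [Real.cos_pi_div_two_sub],
      by rwa [Real.sin_pi_div_two_sub]⟩

lemma exists_cos_sin_eq_of_abs_sub_le_pi {x y : ℝ} (h : x ^ 2 + y ^ 2 = 1) (m : ℝ) :
    ∃ t, |t - m| ≤ Real.pi ∧ x = Real.cos t ∧ y = Real.sin t := by
  have hper : Function.Periodic (fun t ↦ (Real.cos t, Real.sin t)) (2 * Real.pi) := fun t ↦ by simp
  have hnorm : ‖(⟨x, y⟩ : ℂ)‖ = 1 := by
    rw [Complex.norm_eq_sqrt_sq_add_sq, h, Real.sqrt_one]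
  have hx := Complex.norm_mul_cos_arg ⟨x, y⟩
  have hy := Complex.norm_mul_sin_arg ⟨x, y⟩
  rw [hnorm, one_mul] at hx hy
  obtain ⟨t, ht, harg⟩ := hper.exists_mem_Ioc Real.two_pi_pos (Complex.arg ⟨x, y⟩) (m - Real.pi)
  rw [Prod.mk.injEq, hx, hy] at harg
  exact ⟨t, abs_le.2 ⟨by linarith [ht.1], by linarith [ht.2]⟩, harg⟩

lemma mem_rationalArc_iff (hη : 0 ≤ η) (hηπ : η ≤ Real.pi) {x : ℚ × ℚ}
    (hx : x.1 ^ 2 + x.2 ^ 2 = 1) :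
    x ∈ rationalArc m η ↔ Real.cos η ≤ Real.cos m * x.1 + Real.sin m * x.2 := by
  have hcos (t : ℝ) : Real.cos m * Real.cos t + Real.sin m * Real.sin t = Real.cos (t - m) := by
    rw [Real.cos_sub]
    ring
  constructor
  · rintro ⟨t, hmt, htm, hxt, hyt⟩
    have ht : |t - m| ≤ η := abs_le.2 ⟨by linarith, by linarith⟩
    rw [hxt, hyt, hcos]
    exact (cos_le_cos_iff_abs_le hη hηπ (ht.trans hηπ)).2 ht
  · intro h
    obtain ⟨t, ht, hxt, hyt⟩ :=
      exists_cos_sin_eq_of_abs_sub_le_pi (x := x.1) (y := x.2) (by exact_mod_cast hx) m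
    rw [hxt, hyt, hcos, cos_le_cos_iff_abs_le hη hηπ ht, abs_le] at h
    exact ⟨t, by linarith [h.1], by linarith [h.2], hxt, hyt⟩

lemma sq_add_sq_circleParam {z : Fin 2 → ℤ} (hz : z ∈ oddPrimitive) :
    (circleParam z).1 ^ 2 + (circleParam z).2 ^ 2 = 1 := by
  have hnorm : (z 0 ^ 2 + z 1 ^ 2 : ℚ) ≠ 0 := by exact_mod_cast (sq_add_sq_pos_of_odd hz.1).ne'
  rw [circleParam]
  field_simp
  ring

lemma circleParam_mem_rationalArc_iff (hη : 0 ≤ η) (hηπ : η ≤ Real.pi) {z : Fin 2 → ℤ}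
    (hz : z ∈ oddPrimitive) :
    circleParam z ∈ rationalArc m η ↔ (fun i ↦ (z i : ℝ)) ∈ doubleCone m η := by
  have hnorm : (0 : ℝ) < z 0 ^ 2 + z 1 ^ 2 := by exact_mod_cast sq_add_sq_pos_of_odd hz.1
  rw [mem_rationalArc_iff hη hηπ (sq_add_sq_circleParam hz), circleParam]
  push_cast
  rw [← mul_div_assoc, ← mul_div_assoc, ← add_div, le_div_iff₀ hnorm]
  rfl

lemma paramSet_rationalArc (hη : 0 ≤ η) (hηπ : η ≤ Real.pi) {H : ℕ} (hH : 0 < H) :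
    paramSet (rationalArc m η) H = intPoints (√(H : ℝ) • doubleSector m η) ∩ oddPrimitive := by
  ext z
  rw [Set.inter_comm]
  refine and_congr_right fun hz ↦ ?_
  rw [circleParam_mem_rationalArc_iff hη hηπ hz, intPoints, Set.mem_ofPred_eq,
    mem_smul_doubleSector_iff (by positivity), Real.sq_sqrt (Nat.cast_nonneg H)]
  norm_cast

theorem tendsto_ncard_paramSet_rationalArc (hη : 0 ≤ η) (hηπ : η ≤ Real.pi) :
    Tendsto (fun H : ℕ ↦ ((paramSet (rationalArc m η) H).ncard : ℝ) / H) atTop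
      (𝓝 (4 / Real.pi ^ 2 * η)) := by
  have hlim := (isJordanStar_doubleSector (m := m) (η := η)).tendsto_ncard_inter_oddPrimitive.comp
    (Real.tendsto_sqrt_atTop.comp tendsto_natCast_atTop_atTop)
  rw [volume_real_doubleSector hη hηπ] at hlim
  refine hlim.congr' ?_
  filter_upwards [eventually_gt_atTop 0] with H hH
  simp only [Function.comp_apply, paramSet_rationalArc hη hηπ hH, Real.sq_sqrt (Nat.cast_nonneg H)]

end Arc

/-- **Counting rational points on an arc.**  For an arc
`A = {(cos t, sin t) : θ₁ ≤ t ≤ θ₂}` of the unit circle with `0 < θ₂ − θ₁ ≤ 2π`, the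
number of rational points on `A` of height at most `H` is asymptotic to
`(2·length(A)/π²)·H = 2(θ₂−θ₁)/π²·H` as `H → ∞`. -/
theorem rational_points_on_arc_count (θ₁ θ₂ : ℝ)
    (h₁ : 0 < θ₂ - θ₁) (h₂ : θ₂ - θ₁ ≤ 2 * Real.pi) :
    Tendsto
      (fun H : ℕ =>
        (1 : ℝ) / H *
          ({pq : ℚ × ℚ |
              (∃ t : ℝ, θ₁ ≤ t ∧ t ≤ θ₂ ∧
                (pq.1 : ℝ) = Real.cos t ∧ (pq.2 : ℝ) = Real.sin t) ∧
              height pq.1 pq.2 ≤ H}.ncard : ℝ))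
      atTop (nhds (2 * (θ₂ - θ₁) / Real.pi ^ 2)) := by
  obtain ⟨m, η, rfl, rfl⟩ : ∃ m η, θ₁ = m - η ∧ θ₂ = m + η :=
    ⟨(θ₁ + θ₂) / 2, (θ₂ - θ₁) / 2, by ring, by ring⟩
  have hη : 0 ≤ η := by linarith
  have hηπ : η ≤ Real.pi := by linarith
  have hcount (H : ℕ) :
      2 * ({x | x ∈ rationalArc m η ∧ height x.1 x.2 ≤ H}.ncard : ℝ) =
        (paramSet (rationalArc m η) H).ncard +
          (paramSet (rationalArc (Real.pi / 2 - m) η) H).ncard := by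
    rw [← swap_preimage_rationalArc]
    exact_mod_cast two_mul_ncard_height_le (fun _ ↦ sq_add_sq_eq_one_of_mem_rationalArc) H
  have hlim := ((tendsto_ncard_paramSet_rationalArc (m := m) hη hηπ).add
    (tendsto_ncard_paramSet_rationalArc (m := Real.pi / 2 - m) hη hηπ)).div_const 2
  convert hlim using 1
  · funext H
    rw [← add_div, ← hcount, one_div_mul_eq_div, mul_div_assoc, mul_div_cancel_left₀ _ two_ne_zero]
    rfl
  · congr 1
    ring
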